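/- Let n be a positive integer, let E_1, …, E_{2n+1} be Banach spaces over 𝕂 (= ℝ or ℂ), and let 1 ≤ r_{2n+1} ≤ r_1, …, r_{2n} ≤ 2. Suppose that for each i = 1, …, n there is C_{2i} > 0 such that every continuous bilinear form B on E_{2i−1} × E_{2i} is absolutely (1;r_{2i−1},r_{2i})-summing with π_{(1;r_{2i−1},r_{2i})}(B) ≤ C_{2i}‖B‖. Then every continuous 2n-linear form A on E_1 × ⋯ × E_{2n} is absolutely (1;r_1,…,r_{2n})-summing with π_{(1;r_1,…,r_{2n})}(A) ≤ C_2⋯C_{2n}‖A‖, and every continuous (2n+1)-linear form A on E_1 × ⋯ × E_{2n+1} is absolutely (r_{2n+1};r_1,…,r_{2n+1})-summing with π_{(r_{2n+1};r_1,…,r_{2n+1})}(A) ≤ C_2⋯C_{2n}‖A‖. -/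

import Mathlib

open scoped BigOperators NNReal ENNReal

/-- The weak `ℓ_r` norm of a finite family `(x_j)` in a normed space:
`sup_{‖φ‖ ≤ 1} (∑_j ‖φ(x_j)‖^r)^(1/r)`. -/
noncomputable def weakNorm (𝕜 : Type*) [RCLike 𝕜] {E : Type*} [NormedAddCommGroup E]
    [NormedSpace 𝕜 E] (r : ℝ) {m : ℕ} (x : Fin m → E) : ℝ :=
  ⨆ φ : {φ : E →L[𝕜] 𝕜 // ‖φ‖ ≤ 1}, (∑ j, ‖φ.1 (x j)‖ ^ r) ^ (1 / r)

/-!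
A bilinear coincidence says that the tensors `x_j ⊗ y_j` form a weakly `1`-summable family.
Averaging over signs then gives, as in the Defant–Voigt theorem, `∑ |B_j(x_j, y_j)| ≤ D K` for every
*family* of bilinear forms with `∑ |B_j(a, b)| ≤ K ‖a‖ ‖b‖`. Hence in a family `A_j` of `2n`-linear
forms with `∑ |A_j(v)| ≤ K ∏ ‖v_i‖` the variables can be made to depend on `j` one pair at a time.
For a single form `A`, such a family arises by substituting its first pair of variables
(`2n` variables), or its last variable, weighted by Hölder-dual coefficients (`2n + 1` variables).
-/

section

variable {𝕜 : Type*} [RCLike 𝕜] {J : Type*} [Fintype J]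

section WeakNorm

variable {E : Type*} [NormedAddCommGroup E] [NormedSpace 𝕜 E] {m : ℕ}

theorem weakNorm_nonneg (r : ℝ) (x : Fin m → E) : 0 ≤ weakNorm 𝕜 r x :=
  Real.iSup_nonneg fun _ ↦ by positivity

theorem rpow_sum_norm_apply_rpow_le_weakNorm {r : ℝ} (hr : 0 ≤ r) (x : Fin m → E)
    {φ : E →L[𝕜] 𝕜} (hφ : ‖φ‖ ≤ 1) :
    (∑ j, ‖φ (x j)‖ ^ r) ^ (1 / r) ≤ weakNorm 𝕜 r x := by
  refine le_ciSup (f := fun φ : {φ : E →L[𝕜] 𝕜 // ‖φ‖ ≤ 1} ↦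
    (∑ j, ‖φ.1 (x j)‖ ^ r) ^ (1 / r)) ⟨(∑ j, ‖x j‖ ^ r) ^ (1 / r), ?_⟩ ⟨φ, hφ⟩
  rintro _ ⟨ψ, rfl⟩
  dsimp only
  gcongr with j
  exact ψ.1.le_of_opNorm_le_of_le ψ.2 le_rfl |>.trans_eq (one_mul _)

theorem rpow_sum_norm_apply_rpow_le_weakNorm_mul {r : ℝ} (hr : 0 < r) (x : Fin m → E)
    (φ : E →L[𝕜] 𝕜) :
    (∑ j, ‖φ (x j)‖ ^ r) ^ (1 / r) ≤ weakNorm 𝕜 r x * ‖φ‖ := by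
  rcases eq_or_ne φ 0 with rfl | hφ
  · simp [Real.zero_rpow hr.ne', Real.zero_rpow (inv_ne_zero hr.ne')]
  set ψ : E →L[𝕜] 𝕜 := ((‖φ‖ : 𝕜)⁻¹) • φ
  have hψ : ‖ψ‖ ≤ 1 := (norm_smul_inv_norm hφ).le
  have norm_φ_apply (j : Fin m) : ‖φ (x j)‖ = ‖φ‖ * ‖ψ (x j)‖ := by
    simp [ψ, hφ]
  calc (∑ j, ‖φ (x j)‖ ^ r) ^ (1 / r)
      = ‖φ‖ * (∑ j, ‖ψ (x j)‖ ^ r) ^ (1 / r) := by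
        simp_rw [norm_φ_apply, Real.mul_rpow (norm_nonneg φ) (norm_nonneg _)]
        rw [← Finset.mul_sum, Real.mul_rpow (by positivity) (by positivity), one_div,
          Real.rpow_rpow_inv (norm_nonneg φ) hr.ne']
    _ ≤ ‖φ‖ * weakNorm 𝕜 r x := by
        gcongr
        exact rpow_sum_norm_apply_rpow_le_weakNorm hr.le x hψ
    _ = weakNorm 𝕜 r x * ‖φ‖ := mul_comm _ _

end WeakNorm

theorem exists_nonneg_lp_dual {r : ℝ} (hr : 1 ≤ r) {a : J → ℝ} (ha : 0 ≤ a) :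
    ∃ g : J → ℝ, 0 ≤ g ∧ ∑ j, a j * g j = (∑ j, a j ^ r) ^ (1 / r) ∧
      ∀ b : J → ℝ, 0 ≤ b → ∑ j, b j * g j ≤ (∑ j, b j ^ r) ^ (1 / r) := by
  rcases hr.eq_or_lt with rfl | hr
  · exact ⟨1, zero_le_one, by simp, by simp⟩
  have hrq := Real.HolderConjugate.conjExponent hr
  lift a to J → ℝ≥0 using ha
  obtain ⟨g, hg, hag⟩ := (NNReal.isGreatest_Lp Finset.univ a hrq).1
  refine ⟨fun j ↦ g j, fun j ↦ (g j).coe_nonneg, ?_, fun b hb ↦ ?_⟩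
  · beta_reduce at hag ⊢
    exact_mod_cast hag
  · lift b to J → ℝ≥0 using hb
    have hbg := (NNReal.isGreatest_Lp Finset.univ b hrq).2 ⟨g, hg, rfl⟩
    beta_reduce at hbg ⊢
    exact_mod_cast hbg

section Signs

variable {W F : Type*} [AddCommGroup W]

theorem sum_smul_sub_sum_mul_mulSingle_neg_one_smul [DecidableEq J] (ε : J → ℤˣ)
    (w : J → W) (j : J) :
    ∑ k, ε k • w k - ∑ k, (ε * Pi.mulSingle j (-1) : J → ℤˣ) k • w k = 2 • ε j • w j := by
  rw [← Finset.sum_sub_distrib, Finset.sum_eq_single j]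
  · simp [Units.smul_def, two_nsmul]
  · intro k _ hkj
    simp [hkj]
  · simp

variable [SeminormedAddCommGroup F] [NormedSpace ℝ F]

theorem card_mul_norm_apply_le_sum_signs [DecidableEq J] (e : W →+ F) (w : J → W) (j : J) :
    Fintype.card (J → ℤˣ) * ‖e (w j)‖ ≤ ∑ ε : J → ℤˣ, ‖e (∑ k, ε k • w k)‖ := by
  set S : (J → ℤˣ) → W := fun ε ↦ ∑ k, ε k • w k
  have two_mul_norm_le (ε : J → ℤˣ) :
      2 * ‖e (w j)‖ ≤ ‖e (S ε)‖ + ‖e (S (ε * Pi.mulSingle j (-1)))‖ :=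
    calc 2 * ‖e (w j)‖ = ‖e (S ε) - e (S (ε * Pi.mulSingle j (-1)))‖ := by
          rw [← map_sub, sum_smul_sub_sum_mul_mulSingle_neg_one_smul, map_nsmul, Units.smul_def,
            map_zsmul, ← Units.smul_def, two_nsmul, ← two_smul ℝ, norm_smul,
            norm_units_zsmul, Real.norm_ofNat]
      _ ≤ _ := norm_sub_le _ _
  have sum_flip : ∑ ε, ‖e (S (ε * Pi.mulSingle j (-1)))‖ = ∑ ε, ‖e (S ε)‖ :=
    Equiv.sum_comp (Equiv.mulRight (Pi.mulSingle j (-1))) fun ε ↦ ‖e (S ε)‖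
  have h_sum := Finset.sum_le_sum fun ε (_ : ε ∈ Finset.univ) ↦ two_mul_norm_le ε
  rw [Finset.sum_add_distrib, sum_flip, Finset.sum_const, Finset.card_univ, nsmul_eq_mul] at h_sum
  linarith

theorem sum_norm_apply_le_of_forall_signs (e : J → W →+ F) (w : J → W) {C : ℝ}
    (h : ∀ ε : J → ℤˣ, ∑ j, ‖e j (∑ k, ε k • w k)‖ ≤ C) : ∑ j, ‖e j (w j)‖ ≤ C := by
  classical
  refine le_of_mul_le_mul_left (a := (Fintype.card (J → ℤˣ) : ℝ)) ?_
    (mod_cast Fintype.card_pos)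
  calc Fintype.card (J → ℤˣ) * ∑ j, ‖e j (w j)‖
      ≤ ∑ j, ∑ ε : J → ℤˣ, ‖e j (∑ k, ε k • w k)‖ := by
        rw [Finset.mul_sum]
        exact Finset.sum_le_sum fun j _ ↦ card_mul_norm_apply_le_sum_signs (e j) w j
    _ = ∑ ε : J → ℤˣ, ∑ j, ‖e j (∑ k, ε k • w k)‖ := Finset.sum_comm
    _ ≤ Fintype.card (J → ℤˣ) * C := by
        simpa using Finset.sum_le_card_nsmul Finset.univ _ C fun ε _ ↦ h ε

end Signs

section BilinearForms

variable {X Y : Type*} [SeminormedAddCommGroup X] [NormedSpace 𝕜 X]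
  [SeminormedAddCommGroup Y] [NormedSpace 𝕜 Y] {x : J → X} {y : J → Y} {D K : ℝ}

variable (𝕜) in
/-- The tensors `x_j ⊗ y_j` have weak `ℓ_1` norm at most `D` in the projective tensor product of
`X` and `Y`. Functionals on that space are encoded as continuous bilinear forms. -/
def IsWeaklySummablePair (D : ℝ) (x : J → X) (y : J → Y) : Prop :=
  ∀ B : X →L[𝕜] Y →L[𝕜] 𝕜, ∑ j, ‖B (x j) (y j)‖ ≤ D * ‖B‖

theorem IsWeaklySummablePair.sum_norm_apply_le (hxy : IsWeaklySummablePair 𝕜 D x y)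
    (hD : 0 ≤ D) (hK : 0 ≤ K) {B : J → X →L[𝕜] Y →L[𝕜] 𝕜}
    (hB : ∀ a b, ∑ j, ‖B j a b‖ ≤ K * ‖a‖ * ‖b‖) :
    ∑ j, ‖B j (x j) (y j)‖ ≤ D * K := by
  let evalAt (j : J) : (X →L[𝕜] Y →L[𝕜] 𝕜) →+ 𝕜 :=
    { toFun := fun T ↦ T (x j) (y j), map_zero' := rfl, map_add' := fun _ _ ↦ rfl }
  have norm_signed_sum_le (ε : J → ℤˣ) : ‖∑ k, ε k • B k‖ ≤ K := by
    refine ContinuousLinearMap.opNorm_le_bound₂ _ hK fun a b ↦ ?_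
    calc ‖(∑ k, ε k • B k) a b‖ = ‖∑ k, ε k • B k a b‖ := by
          simp [Units.smul_def]
      _ ≤ ∑ k, ‖ε k • B k a b‖ := norm_sum_le _ _
      _ = ∑ k, ‖B k a b‖ := by simp only [norm_units_zsmul]
      _ ≤ K * ‖a‖ * ‖b‖ := hB a b
  exact sum_norm_apply_le_of_forall_signs evalAt B fun ε ↦
    (hxy _).trans (mul_le_mul_of_nonneg_left (norm_signed_sum_le ε) hD)

end BilinearForms

theorem prod_fin_add_two {M : Type*} [CommMonoid M] {k : ℕ} (f : Fin (k + 2) → M) :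
    ∏ i, f i = f 0 * f (Fin.succ 0) * ∏ i : Fin k, f i.succ.succ := by
  rw [Fin.prod_univ_succ, Fin.prod_univ_succ, mul_assoc]

theorem prod_fin_two_mul {M : Type*} [CommMonoid M] {n : ℕ} (f : Fin (2 * n) → M) :
    ∏ i, f i = ∏ i : Fin n, f ⟨2 * i, by lia⟩ * f ⟨2 * i + 1, by lia⟩ := by
  induction n with
  | zero => rfl
  | succ n ih =>
    rw [Fin.prod_univ_succ (n := n)]
    exact (prod_fin_add_two f).trans (congrArg _ (ih fun i ↦ f i.succ.succ))

section FirstPair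

variable {k : ℕ} {E : Fin (k + 2) → Type*} [∀ i, NormedAddCommGroup (E i)]
  [∀ i, NormedSpace 𝕜 (E i)]

/-- The bilinear form `(a, b) ↦ A(a, b, v)` in the first two variables of `A`. -/
noncomputable def firstPairForm (A : ContinuousMultilinearMap 𝕜 E 𝕜)
    (v : ∀ i : Fin k, E i.succ.succ) : E 0 →L[𝕜] E (Fin.succ 0) →L[𝕜] 𝕜 :=
  (ContinuousLinearMap.compL 𝕜 (E (Fin.succ 0)) _ 𝕜
      (ContinuousMultilinearMap.apply 𝕜 (fun i : Fin k ↦ E i.succ.succ) 𝕜 v)) ∘L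
    (continuousMultilinearCurryLeftEquiv 𝕜 (fun i : Fin (k + 1) ↦ E i.succ) 𝕜 :
      _ →L[𝕜] E (Fin.succ 0) →L[𝕜] _) ∘L A.curryLeft

theorem firstPairForm_apply (A : ContinuousMultilinearMap 𝕜 E 𝕜) (v : ∀ i : Fin k, E i.succ.succ)
    (a : E 0) (b : E (Fin.succ 0)) :
    firstPairForm A v a b = A (Fin.cons a (Fin.cons (α := fun i ↦ E i.succ) b v)) :=
  rfl

theorem firstPairForm_apply_self (A : ContinuousMultilinearMap 𝕜 E 𝕜) (v : ∀ i, E i) :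
    firstPairForm A (fun i ↦ v i.succ.succ) (v 0) (v (Fin.succ 0)) = A v := by
  rw [firstPairForm_apply]
  congr 1
  exact (congrArg (Fin.cons (v 0)) (Fin.cons_self_tail (Fin.tail v))).trans (Fin.cons_self_tail v)

theorem norm_firstPairForm_le (A : ContinuousMultilinearMap 𝕜 E 𝕜)
    (v : ∀ i : Fin k, E i.succ.succ) : ‖firstPairForm A v‖ ≤ ‖A‖ * ∏ i, ‖v i‖ := by
  refine ContinuousLinearMap.opNorm_le_bound₂ _ (by positivity) fun a b ↦ ?_
  rw [firstPairForm_apply]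
  refine (A.le_opNorm _).trans_eq ?_
  simp only [prod_fin_add_two, Fin.cons_zero, Fin.cons_succ]
  ring

end FirstPair

section Multilinear

theorem sum_norm_apply_le_prod_mul {n : ℕ} {E : Fin (2 * n) → Type*}
    [∀ i, NormedAddCommGroup (E i)] [∀ i, NormedSpace 𝕜 (E i)] {x : ∀ i, J → E i}
    {D : Fin n → ℝ} (hD : ∀ i, 0 ≤ D i)
    (hx : ∀ i : Fin n,
      IsWeaklySummablePair 𝕜 (D i) (x ⟨2 * i, by lia⟩) (x ⟨2 * i + 1, by lia⟩))
    {K : ℝ} (hK : 0 ≤ K) {A : J → ContinuousMultilinearMap 𝕜 E 𝕜}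
    (hA : ∀ v, ∑ j, ‖A j v‖ ≤ K * ∏ i, ‖v i‖) :
    ∑ j, ‖A j (fun i ↦ x i j)‖ ≤ (∏ i, D i) * K := by
  induction n generalizing K with
  | zero =>
    have h_empty (j : J) : (fun i ↦ x i j) = 0 := funext fun i ↦ i.elim0
    simpa [h_empty] using hA 0
  | succ n ih =>
    let B (j : J) := firstPairForm (k := 2 * n) (A j) fun i ↦ x i.succ.succ j
    have hB (a : E 0) (b : E (Fin.succ 0)) :
        ∑ j, ‖B j a b‖ ≤ (∏ i : Fin n, D i.succ) * K * ‖a‖ * ‖b‖ := by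
      refine (ih (E := fun i ↦ E i.succ.succ) (x := fun i ↦ x i.succ.succ)
        (A := fun j ↦ ((A j).curryLeft a).curryLeft b) (fun i ↦ hD i.succ) (fun i ↦ hx i.succ)
        (K := K * ‖a‖ * ‖b‖) (by positivity) fun v ↦ ?_).trans_eq (by ring)
      refine (hA _).trans_eq ?_
      rw [mul_assoc, mul_assoc, ← mul_assoc ‖a‖]
      exact congrArg _ (prod_fin_add_two (k := 2 * n) _)
    calc ∑ j, ‖A j (fun i ↦ x i j)‖ = ∑ j, ‖B j (x 0 j) (x (Fin.succ 0) j)‖ :=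
          Finset.sum_congr rfl fun j _ ↦ congrArg _ (firstPairForm_apply_self _ _).symm
      _ ≤ D 0 * ((∏ i : Fin n, D i.succ) * K) :=
          (hx 0).sum_norm_apply_le (hD 0)
            (mul_nonneg (Finset.prod_nonneg fun i _ ↦ hD i.succ) hK) hB
      _ = (∏ i, D i) * K := by rw [Fin.prod_univ_succ, mul_assoc]

theorem sum_norm_apply_le_prod_mul_norm {n : ℕ} (hn : n ≠ 0) {E : Fin (2 * n) → Type*}
    [∀ i, NormedAddCommGroup (E i)] [∀ i, NormedSpace 𝕜 (E i)] {x : ∀ i, J → E i}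
    {D : Fin n → ℝ} (hD : ∀ i, 0 ≤ D i)
    (hx : ∀ i : Fin n,
      IsWeaklySummablePair 𝕜 (D i) (x ⟨2 * i, by lia⟩) (x ⟨2 * i + 1, by lia⟩))
    (A : ContinuousMultilinearMap 𝕜 E 𝕜) :
    ∑ j, ‖A (fun i ↦ x i j)‖ ≤ (∏ i, D i) * ‖A‖ := by
  obtain ⟨n, rfl⟩ := Nat.exists_eq_succ_of_ne_zero hn
  let A' (j : J) := (A.curryLeft (x 0 j)).curryLeft (x (Fin.succ 0) j)
  have hA' (v : ∀ i : Fin (2 * n), E i.succ.succ) :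
      ∑ j, ‖A' j v‖ ≤ D 0 * ‖A‖ * ∏ i, ‖v i‖ :=
    calc ∑ j, ‖A' j v‖ = ∑ j, ‖firstPairForm A v (x 0 j) (x (Fin.succ 0) j)‖ := rfl
      _ ≤ D 0 * ‖firstPairForm A v‖ := hx 0 _
      _ ≤ D 0 * (‖A‖ * ∏ i, ‖v i‖) :=
          mul_le_mul_of_nonneg_left (norm_firstPairForm_le A v) (hD 0)
      _ = D 0 * ‖A‖ * ∏ i, ‖v i‖ := (mul_assoc _ _ _).symm
  calc ∑ j, ‖A (fun i ↦ x i j)‖ = ∑ j, ‖A' j (fun i ↦ x i.succ.succ j)‖ :=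
        Finset.sum_congr rfl fun j _ ↦ congrArg _ (firstPairForm_apply_self (k := 2 * n) A _).symm
    _ ≤ (∏ i : Fin n, D i.succ) * (D 0 * ‖A‖) :=
        sum_norm_apply_le_prod_mul (x := fun i ↦ x i.succ.succ) (fun i ↦ hD i.succ)
          (fun i ↦ hx i.succ) (mul_nonneg (hD 0) (norm_nonneg A)) hA'
    _ = (∏ i, D i) * ‖A‖ := by rw [Fin.prod_univ_succ]; ring

variable {n : ℕ} {E : Fin (2 * n + 1) → Type*} [∀ i, NormedAddCommGroup (E i)]
  [∀ i, NormedSpace 𝕜 (E i)] {D : Fin n → ℝ}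

theorem sum_norm_snoc_le_prod_mul {x : ∀ i : Fin (2 * n), J → E i.castSucc}
    {z : J → E (Fin.last (2 * n))} {w : ℝ} (hD : ∀ i, 0 ≤ D i)
    (hx : ∀ i : Fin n,
      IsWeaklySummablePair 𝕜 (D i) (x ⟨2 * i, by lia⟩) (x ⟨2 * i + 1, by lia⟩))
    (hw : 0 ≤ w) (hz : ∀ φ : E (Fin.last (2 * n)) →L[𝕜] 𝕜, ∑ j, ‖φ (z j)‖ ≤ w * ‖φ‖)
    (A : ContinuousMultilinearMap 𝕜 E 𝕜) :
    ∑ j, ‖A (Fin.snoc (fun i ↦ x i j) (z j))‖ ≤ (∏ i, D i) * (w * ‖A‖) := by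
  let A' (j : J) :=
    (ContinuousLinearMap.apply 𝕜 𝕜 (z j)).compContinuousMultilinearMap A.curryRight
  have hA' (v : ∀ i : Fin (2 * n), E i.castSucc) : ∑ j, ‖A' j v‖ ≤ w * ‖A‖ * ∏ i, ‖v i‖ :=
    calc ∑ j, ‖A' j v‖ ≤ w * ‖A.curryRight v‖ := hz (A.curryRight v)
      _ ≤ w * (‖A‖ * ∏ i, ‖v i‖) := by
          rw [← A.curryRight_norm]
          exact mul_le_mul_of_nonneg_left (A.curryRight.le_opNorm v) hw
      _ = w * ‖A‖ * ∏ i, ‖v i‖ := (mul_assoc _ _ _).symm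
  have A'_apply (j : J) : A' j (fun i ↦ x i j) = A (Fin.snoc (fun i ↦ x i j) (z j)) := rfl
  simp_rw [← A'_apply]
  exact sum_norm_apply_le_prod_mul (E := fun i ↦ E i.castSucc) hD hx
    (mul_nonneg hw (norm_nonneg A)) hA'

theorem rpow_sum_norm_apply_rpow_le_prod_mul {m : ℕ} {x : ∀ i, Fin m → E i} {r : ℝ}
    (hr : 1 ≤ r) (hD : ∀ i, 0 ≤ D i)
    (hx : ∀ i : Fin n,
      IsWeaklySummablePair 𝕜 (D i) (x ⟨2 * i, by lia⟩) (x ⟨2 * i + 1, by lia⟩))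
    (A : ContinuousMultilinearMap 𝕜 E 𝕜) :
    (∑ j, ‖A (fun i ↦ x i j)‖ ^ r) ^ (1 / r) ≤
      (∏ i, D i) * (weakNorm 𝕜 r (x (Fin.last (2 * n))) * ‖A‖) := by
  obtain ⟨g, hg_nonneg, hg_norm, hg_le⟩ :=
    exists_nonneg_lp_dual hr fun j ↦ norm_nonneg (A fun i ↦ x i j)
  let z (j : Fin m) : E (Fin.last (2 * n)) := (g j : 𝕜) • x (Fin.last (2 * n)) j
  have hz (φ : E (Fin.last (2 * n)) →L[𝕜] 𝕜) :
      ∑ j, ‖φ (z j)‖ ≤ weakNorm 𝕜 r (x (Fin.last (2 * n))) * ‖φ‖ :=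
    calc ∑ j, ‖φ (z j)‖ = ∑ j, ‖φ (x (Fin.last (2 * n)) j)‖ * g j := by
          simp [z, abs_of_nonneg (hg_nonneg _), mul_comm]
      _ ≤ (∑ j, ‖φ (x (Fin.last (2 * n)) j)‖ ^ r) ^ (1 / r) :=
          hg_le _ fun _ ↦ norm_nonneg _
      _ ≤ _ := rpow_sum_norm_apply_rpow_le_weakNorm_mul (by linarith) _ φ
  have norm_apply_snoc (j : Fin m) :
      ‖A (fun i ↦ x i j)‖ * g j = ‖A (Fin.snoc (fun i ↦ x i.castSucc j) (z j))‖ := by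
    rw [← A.curryRight_apply, map_smul, A.curryRight_apply, norm_smul, RCLike.norm_ofReal,
      abs_of_nonneg (hg_nonneg j), mul_comm]
    exact congrArg (_ * ‖A ·‖) (Fin.snoc_init_self _).symm
  calc (∑ j, ‖A (fun i ↦ x i j)‖ ^ r) ^ (1 / r) = ∑ j, ‖A (fun i ↦ x i j)‖ * g j :=
        hg_norm.symm
    _ = ∑ j, ‖A (Fin.snoc (fun i ↦ x i.castSucc j) (z j))‖ := by simp_rw [norm_apply_snoc]
    _ ≤ _ := sum_norm_snoc_le_prod_mul hD hx (weakNorm_nonneg r _) hz A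

end Multilinear

end

theorem pairwise_bilinear_to_multilinear_general {𝕜 : Type*} [RCLike 𝕜] (n : ℕ) (hn : 1 ≤ n)
    (E : Fin (2 * n + 1) → Type*) [∀ i, NormedAddCommGroup (E i)] [∀ i, NormedSpace 𝕜 (E i)]
    (rs : Fin (2 * n + 1) → ℝ) (hlast : 1 ≤ rs ⟨2 * n, by lia⟩)
    (Cs : Fin n → ℝ) (hCs : ∀ i, 0 ≤ Cs i)
    (hbil : ∀ i : Fin n,
      ∀ B : E ⟨2 * i, by lia⟩ →L[𝕜] E ⟨2 * i + 1, by lia⟩ →L[𝕜] 𝕜,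
      ∀ (m : ℕ) (x : Fin m → E ⟨2 * i, by lia⟩) (y : Fin m → E ⟨2 * i + 1, by lia⟩),
        ∑ j, ‖B (x j) (y j)‖ ≤ Cs i * ‖B‖ *
          (weakNorm 𝕜 (rs ⟨2 * i, by lia⟩) x *
            weakNorm 𝕜 (rs ⟨2 * i + 1, by lia⟩) y)) :
    (∀ A : ContinuousMultilinearMap 𝕜 (fun i : Fin (2 * n) ↦ E (Fin.castSucc i)) 𝕜,
      ∀ (m : ℕ) (x : ∀ i : Fin (2 * n), Fin m → E (Fin.castSucc i)),
        ∑ j, ‖A (fun i ↦ x i j)‖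
          ≤ (∏ i, Cs i) * ‖A‖ * ∏ i, weakNorm 𝕜 (rs (Fin.castSucc i)) (x i)) ∧
    (∀ A : ContinuousMultilinearMap 𝕜 E 𝕜,
      ∀ (m : ℕ) (x : ∀ i, Fin m → E i),
        (∑ j, ‖A (fun i ↦ x i j)‖ ^ rs ⟨2 * n, by lia⟩) ^ (1 / rs ⟨2 * n, by lia⟩)
          ≤ (∏ i, Cs i) * ‖A‖ * ∏ i, weakNorm 𝕜 (rs i) (x i)) := by
  let D {m : ℕ} (x : ∀ i : Fin (2 * n), Fin m → E i.castSucc) (i : Fin n) : ℝ :=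
    Cs i * (weakNorm 𝕜 (rs ⟨2 * i, by lia⟩) (x ⟨2 * i, by lia⟩) *
      weakNorm 𝕜 (rs ⟨2 * i + 1, by lia⟩) (x ⟨2 * i + 1, by lia⟩))
  have D_nonneg {m : ℕ} (x : ∀ i : Fin (2 * n), Fin m → E i.castSucc) (i : Fin n) : 0 ≤ D x i :=
    mul_nonneg (hCs i) (mul_nonneg (weakNorm_nonneg _ _) (weakNorm_nonneg _ _))
  have summable_pair {m : ℕ} (x : ∀ i : Fin (2 * n), Fin m → E i.castSucc) (i : Fin n) :
      IsWeaklySummablePair 𝕜 (D x i) (x ⟨2 * i, by lia⟩) (x ⟨2 * i + 1, by lia⟩) :=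
    fun B ↦ (hbil i B m _ _).trans_eq (mul_right_comm _ _ _)
  have prod_D {m : ℕ} (x : ∀ i : Fin (2 * n), Fin m → E i.castSucc) :
      ∏ i, D x i = (∏ i, Cs i) * ∏ i : Fin (2 * n), weakNorm 𝕜 (rs i.castSucc) (x i) := by
    rw [Finset.prod_mul_distrib, prod_fin_two_mul]
    rfl
  refine ⟨fun A m x ↦ ?_, fun A m x ↦ ?_⟩
  · refine (sum_norm_apply_le_prod_mul_norm (by lia) (D_nonneg x) (summable_pair x) A).trans_eq ?_
    rw [prod_D, mul_right_comm]
  · refine (rpow_sum_norm_apply_rpow_le_prod_mul hlast (D_nonneg fun i ↦ x i.castSucc)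
      (summable_pair fun i ↦ x i.castSucc) A).trans_eq ?_
    rw [prod_D fun i ↦ x i.castSucc, Fin.prod_univ_castSucc]
    change _ = _ * _ * (_ * weakNorm 𝕜 (rs ⟨2 * n, _⟩) _)
    ring

/-- **Pairwise bilinear coincidences generate multilinear coincidences.** If for each
`i = 1, …, n` every continuous bilinear form on `E_{2i−1} × E_{2i}` is absolutely
`(1; r_{2i−1}, r_{2i})`-summing with constant `C_{2i}‖B‖`, where
`1 ≤ r_{2n+1} ≤ r_1, …, r_{2n} ≤ 2`, then every continuous `2n`-linear form on
`E₁ × ⋯ × E_{2n}` is absolutely `(1; r₁, …, r_{2n})`-summing with constant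
`C₂⋯C_{2n}‖A‖`, and every continuous `(2n+1)`-linear form on `E₁ × ⋯ × E_{2n+1}` is
absolutely `(r_{2n+1}; r₁, …, r_{2n+1})`-summing with constant `C₂⋯C_{2n}‖A‖`. -/
theorem pairwise_bilinear_to_multilinear {𝕜 : Type*} [RCLike 𝕜] (n : ℕ) (hn : 1 ≤ n)
    (E : Fin (2 * n + 1) → Type*) [∀ i, NormedAddCommGroup (E i)] [∀ i, NormedSpace 𝕜 (E i)]
    [∀ i, CompleteSpace (E i)]
    (rs : Fin (2 * n + 1) → ℝ)
    (hlast : 1 ≤ rs ⟨2 * n, by omega⟩)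
    (hrs : ∀ i : Fin (2 * n + 1), i.val < 2 * n → rs ⟨2 * n, by omega⟩ ≤ rs i ∧ rs i ≤ 2)
    (Cs : Fin n → ℝ) (hCs : ∀ i, 0 < Cs i)
    (hbil : ∀ i : Fin n,
      ∀ B : E ⟨2 * i.val, by have := i.isLt; omega⟩ →L[𝕜]
            E ⟨2 * i.val + 1, by have := i.isLt; omega⟩ →L[𝕜] 𝕜,
      ∀ (m : ℕ) (x : Fin m → E ⟨2 * i.val, by have := i.isLt; omega⟩)
        (y : Fin m → E ⟨2 * i.val + 1, by have := i.isLt; omega⟩),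
        ∑ j, ‖B (x j) (y j)‖ ≤ Cs i * ‖B‖ *
          (weakNorm 𝕜 (rs ⟨2 * i.val, by have := i.isLt; omega⟩) x *
            weakNorm 𝕜 (rs ⟨2 * i.val + 1, by have := i.isLt; omega⟩) y)) :
    (∀ A : ContinuousMultilinearMap 𝕜 (fun i : Fin (2 * n) => E (Fin.castSucc i)) 𝕜,
      ∀ (m : ℕ) (x : ∀ i : Fin (2 * n), Fin m → E (Fin.castSucc i)),
        ∑ j, ‖A (fun i => x i j)‖
          ≤ (∏ i, Cs i) * ‖A‖ * ∏ i, weakNorm 𝕜 (rs (Fin.castSucc i)) (x i)) ∧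
    (∀ A : ContinuousMultilinearMap 𝕜 E 𝕜,
      ∀ (m : ℕ) (x : ∀ i, Fin m → E i),
        (∑ j, ‖A (fun i => x i j)‖ ^ rs ⟨2 * n, by omega⟩) ^ (1 / rs ⟨2 * n, by omega⟩)
          ≤ (∏ i, Cs i) * ‖A‖ * ∏ i, weakNorm 𝕜 (rs i) (x i)) :=
  pairwise_bilinear_to_multilinear_general n hn E rs hlast Cs (fun i ↦ (hCs i).le) hbil
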